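/- Let n ≥ 2, 1 ≤ s < ∞, let Ω ⊆ ℝⁿ be a bounded domain, and let 𝒯 be a family of essential tubes for Ω, the tube T ∈ 𝒯 having parameters r_T, l_T, c_T, such that the corresponding components Ω_T are pairwise disjoint. If E_𝒯 = Σ_{T∈𝒯} c_T · (r_T)ⁿ · (l_T/r_T)^{s+1} = ∞, then Ω is not an L^s-averaging domain. -/

import Mathlib

open MeasureTheory Metric Set
open scoped ENNReal

/-- The normalized `L^s`-mean oscillation integral `(1/|E|) ∫_E |u - u_E|^s dz`. -/
noncomputable def lsAvgE {n : ℕ} (s : ℝ) (u : EuclideanSpace ℝ (Fin n) → ℝ)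
    (E : Set (EuclideanSpace ℝ (Fin n))) : ℝ≥0∞ :=
  (volume E)⁻¹ * ∫⁻ z in E, ENNReal.ofReal (|u z - (⨍ y in E, u y)| ^ s)

/-- `Ω` is an `L^s`-averaging domain: there is a finite constant `C` such that for every
locally integrable `u`, `((1/|Ω|) ∫_Ω |u - u_Ω|^s)^{1/s} ≤ C · sup_B ((1/|B|) ∫_B |u - u_B|^s)^{1/s}`,
the supremum over all open balls `B ⊆ Ω`. -/
def IsLsAveragingDomain {n : ℕ} (s : ℝ) (Ω : Set (EuclideanSpace ℝ (Fin n))) : Prop :=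
  ∃ C : ℝ≥0∞, C ≠ ⊤ ∧ ∀ u : EuclideanSpace ℝ (Fin n) → ℝ,
    MeasureTheory.LocallyIntegrableOn u Ω volume →
      (lsAvgE s u Ω) ^ (1/s) ≤
        C * ⨆ (x : EuclideanSpace ℝ (Fin n)) (ρ : ℝ) (_ : 0 < ρ ∧ ball x ρ ⊆ Ω),
          (lsAvgE s u (ball x ρ)) ^ (1/s)

/-- The distance of `z` from the first coordinate axis. -/
noncomputable def radial {n : ℕ} [NeZero n] (z : EuclideanSpace ℝ (Fin n)) : ℝ :=
  Real.sqrt (∑ i ∈ Finset.univ.erase (0 : Fin n), z i ^ 2)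

/-- The standard cylinder `[0, l] × D_r^{n-1}` in `ℝⁿ`, the first coordinate being the axis. -/
def stdCylinder {n : ℕ} [NeZero n] (l r : ℝ) : Set (EuclideanSpace ℝ (Fin n)) :=
  {z | z 0 ∈ Set.Icc (0:ℝ) l ∧ radial z ≤ r}

/-- The wall `[0, l] × ∂D_r^{n-1}` of the standard cylinder. -/
def stdWall {n : ℕ} [NeZero n] (l r : ℝ) : Set (EuclideanSpace ℝ (Fin n)) :=
  {z | z 0 ∈ Set.Icc (0:ℝ) l ∧ radial z = r}

/-- The `t`-th slice `{t} × D_r^{n-1}` of the standard cylinder. -/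
def stdSlice {n : ℕ} [NeZero n] (r t : ℝ) : Set (EuclideanSpace ℝ (Fin n)) :=
  {z | z 0 = t ∧ radial z ≤ r}

/-- `T = φ '' stdCylinder l r` is an essential tube for `Ω` with parameters `l, r, c` and
corresponding component `ΩT`: `ΩT` is a connected component of `T ∩ Ω` missing the wall of `T`,
and each slice of `ΩT` has `(n-1)`-dimensional (Hausdorff) measure at least `c` times that of
the corresponding slice of the tube (an isometric copy of `D_r^{n-1}`). -/
structure IsEssentialTube {n : ℕ} [NeZero n] (Ω : Set (EuclideanSpace ℝ (Fin n)))
    (φ : EuclideanSpace ℝ (Fin n) ≃ᵢ EuclideanSpace ℝ (Fin n))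
    (l r c : ℝ) (ΩT : Set (EuclideanSpace ℝ (Fin n))) : Prop where
  l_pos : 0 < l
  r_pos : 0 < r
  c_pos : 0 < c
  isComp : ∃ p ∈ (φ '' stdCylinder l r) ∩ Ω,
    ΩT = connectedComponentIn ((φ '' stdCylinder l r) ∩ Ω) p
  wall_disjoint : ΩT ∩ (φ '' stdWall l r) = ∅
  slice_meas : ∀ t ∈ Set.Icc (0:ℝ) l,
    ENNReal.ofReal c * μH[(n:ℝ) - 1] (φ '' stdSlice r t) ≤
      μH[(n:ℝ) - 1] (ΩT ∩ φ '' stdSlice r t)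

/-- Projection off the axis. -/
noncomputable def offAxis {n : ℕ} [NeZero n] (z : EuclideanSpace ℝ (Fin n)) :
    EuclideanSpace ℝ (Fin n) := z - (z 0) • EuclideanSpace.single 0 (1:ℝ)

lemma radial_eq {n : ℕ} [NeZero n] (z : EuclideanSpace ℝ (Fin n)) : radial z = ‖offAxis z‖ := by
  rw [radial, EuclideanSpace.norm_eq]
  congr 1
  rw [← Finset.add_sum_erase _ _ (Finset.mem_univ (0 : Fin n))]
  have : ‖(offAxis z) 0‖ ^ 2 = 0 := by simp [offAxis]
  rw [this, zero_add]
  refine Finset.sum_congr rfl fun i hi => ?_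
  have hi' : i ≠ 0 := (Finset.mem_erase.1 hi).1
  simp [offAxis, hi']

lemma offAxis_add {n : ℕ} [NeZero n] (x y : EuclideanSpace ℝ (Fin n)) :
    offAxis (x + y) = offAxis x + offAxis y := by
  simp only [offAxis, PiLp.add_apply, add_smul]; abel

lemma offAxis_smul {n : ℕ} [NeZero n] (a : ℝ) (y : EuclideanSpace ℝ (Fin n)) :
    offAxis (a • y) = a • offAxis y := by
  simp only [offAxis, PiLp.smul_apply, smul_sub, smul_eq_mul, mul_smul]

lemma continuous_radial {n : ℕ} [NeZero n] :
    Continuous (radial : EuclideanSpace ℝ (Fin n) → ℝ) := by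
  unfold radial
  fun_prop

lemma convex_cyl {n : ℕ} [NeZero n] (l r : ℝ) :
    Convex ℝ (stdCylinder l r : Set (EuclideanSpace ℝ (Fin n))) := by
  intro x hx y hy a b ha hb hab
  refine ⟨?_, ?_⟩
  · have := (convex_Icc (0:ℝ) l) hx.1 hy.1 ha hb hab
    simpa using this
  · have h1 := hx.2
    have h2 := hy.2
    rw [radial_eq] at *
    rw [offAxis_add, offAxis_smul, offAxis_smul]
    refine (norm_add_le _ _).trans ?_
    rw [norm_smul, norm_smul, Real.norm_of_nonneg ha, Real.norm_of_nonneg hb]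
    calc _ ≤ a * r + b * r := by gcongr
      _ = r := by rw [← add_mul, hab, one_mul]

lemma convex_slab {n : ℕ} [NeZero n] (l : ℝ) :
    Convex ℝ ({z | z 0 ∈ Set.Icc (0:ℝ) l} : Set (EuclideanSpace ℝ (Fin n))) := by
  intro x hx y hy a b ha hb hab
  have := (convex_Icc (0:ℝ) l) hx hy ha hb hab
  simpa using this

lemma isClosed_cyl {n : ℕ} [NeZero n] (l r : ℝ) :
    IsClosed (stdCylinder l r : Set (EuclideanSpace ℝ (Fin n))) := by
  have h0 : Continuous (fun z : EuclideanSpace ℝ (Fin n) => z 0) := by fun_prop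
  exact (isClosed_Icc.preimage h0).inter (isClosed_le continuous_radial continuous_const)

/-- A ball in `Ω` meeting `ΩT` meets the slab only inside the open cylinder. -/
lemma ball_slab {n : ℕ} [NeZero n] {Ω : Set (EuclideanSpace ℝ (Fin n))}
    {φ : EuclideanSpace ℝ (Fin n) ≃ᵢ EuclideanSpace ℝ (Fin n)}
    {l r c : ℝ} {ΩT : Set (EuclideanSpace ℝ (Fin n))} (h : IsEssentialTube Ω φ l r c ΩT)
    {x : EuclideanSpace ℝ (Fin n)} {R : ℝ} (hB : ball x R ⊆ Ω)
    {q : EuclideanSpace ℝ (Fin n)} (hq : q ∈ ball x R) (hqT : q ∈ ΩT)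
    {w : EuclideanSpace ℝ (Fin n)} (hw : w ∈ ball (φ.symm x) R) (hw0 : w 0 ∈ Set.Icc 0 l) :
    radial w < r ∧ φ w ∈ ΩT := by
  obtain ⟨p, hp, hΩT⟩ := h.isComp
  have hsubT : ΩT ⊆ (φ '' stdCylinder l r) ∩ Ω := hΩT ▸ connectedComponentIn_subset _ _
  have hball : ∀ v, v ∈ ball (φ.symm x) R ↔ φ v ∈ ball x R := by
    intro v
    rw [mem_ball, mem_ball, ← φ.dist_eq v, φ.apply_symm_apply]
  have hq' : φ.symm q ∈ ball (φ.symm x) R := by rw [hball, φ.apply_symm_apply]; exact hq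
  have hqc : φ.symm q ∈ stdCylinder l r := by
    obtain ⟨v, hv, hvq⟩ := (hsubT hqT).1
    rw [← hvq, φ.symm_apply_apply]; exact hv
  -- ball ∩ cylinder lies in ΩT
  have hA : ∀ v ∈ ball (φ.symm x) R, v ∈ stdCylinder l r → φ v ∈ ΩT ∧ radial v < r := by
    have hpre : IsPreconnected (φ '' (ball (φ.symm x) R ∩ stdCylinder l r)) :=
      (((convex_ball _ _).inter (convex_cyl l r)).isPreconnected).image _ φ.continuous.continuousOn
    have hs : φ '' (ball (φ.symm x) R ∩ stdCylinder l r) ⊆ ΩT := by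
      have : ΩT = connectedComponentIn ((φ '' stdCylinder l r) ∩ Ω) q := by
        rw [hΩT]
        apply connectedComponentIn_eq
        rw [← hΩT]; exact hqT
      rw [this]
      apply hpre.subset_connectedComponentIn
      · exact ⟨φ.symm q, ⟨hq', hqc⟩, φ.apply_symm_apply q⟩
      · rintro _ ⟨v, ⟨hv1, hv2⟩, rfl⟩
        exact ⟨⟨v, hv2, rfl⟩, hB ((hball v).1 hv1)⟩
    intro v hv1 hv2
    have hvT : φ v ∈ ΩT := hs ⟨v, ⟨hv1, hv2⟩, rfl⟩
    refine ⟨hvT, lt_of_le_of_ne hv2.2 fun he => ?_⟩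
    have : φ v ∈ ΩT ∩ (φ '' stdWall l r) := ⟨hvT, v, ⟨hv2.1, he⟩, rfl⟩
    rw [h.wall_disjoint] at this
    exact this
  have key : radial w < r := by
    by_contra hcon
    push Not at hcon
    have hpre : IsPreconnected (ball (φ.symm x) R ∩ {z | z 0 ∈ Set.Icc (0:ℝ) l}) :=
      ((convex_ball _ _).inter (convex_slab l)).isPreconnected
    obtain ⟨v, hv, hvr⟩ := hpre.intermediate_value ⟨hq', hqc.1⟩ ⟨hw, hw0⟩
      continuous_radial.continuousOn ⟨hqc.2, hcon⟩
    exact absurd hvr (hA v hv.1 ⟨hv.2, hvr.le⟩).2.ne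
  exact ⟨key, (hA w hw ⟨hw0, key.le⟩).1⟩

/-- The tent function. -/
noncomputable def tent (l r t : ℝ) : ℝ := max 0 (min t (l - t)) / r

/-- The test function of a tube. -/
noncomputable def tubeFun {n : ℕ} [NeZero n]
    (φ : EuclideanSpace ℝ (Fin n) ≃ᵢ EuclideanSpace ℝ (Fin n)) (l r : ℝ)
    (ΩT : Set (EuclideanSpace ℝ (Fin n))) : EuclideanSpace ℝ (Fin n) → ℝ :=
  ΩT.indicator fun z => tent l r ((φ.symm z) 0)

lemma tent_nonneg {l r t : ℝ} (hr : 0 < r) : 0 ≤ tent l r t := by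
  unfold tent; positivity

lemma tent_le {l r t : ℝ} (hr : 0 < r) : tent l r t ≤ |l| / r := by
  unfold tent
  gcongr
  rcases le_total t (l - t) with h | h <;>
  simp only [h, max_le_iff, abs_nonneg, true_and, min_eq_left, min_eq_right] <;>
  linarith [le_abs_self l, abs_nonneg l]

lemma tent_eq_zero {l r t : ℝ} (ht : t ∉ Set.Icc 0 l) : tent l r t = 0 := by
  unfold tent
  rw [max_eq_left, zero_div]
  rw [min_le_iff]
  by_contra hcon
  push Not at hcon
  exact ht ⟨hcon.1.le, by linarith [hcon.2]⟩

lemma tent_diff {l r a b d : ℝ} (hr : 0 < r) (hl : 0 < l) (hd : d = max 0 (max (-a) (a - l)))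
    (hab : |b - a| ≤ d + r) : |tent l r b - tent l r a| ≤ 1 := by
  unfold tent
  rw [← sub_div, abs_div, abs_of_pos hr, div_le_one hr]
  rw [abs_le] at *
  subst hd
  grind

lemma tubeFun_osc {n : ℕ} [NeZero n] (hn : 2 ≤ n) {Ω : Set (EuclideanSpace ℝ (Fin n))}
    {φ : EuclideanSpace ℝ (Fin n) ≃ᵢ EuclideanSpace ℝ (Fin n)}
    {l r c : ℝ} {ΩT : Set (EuclideanSpace ℝ (Fin n))} (h : IsEssentialTube Ω φ l r c ΩT)
    {x : EuclideanSpace ℝ (Fin n)} {R : ℝ} (hB : ball x R ⊆ Ω)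
    {z : EuclideanSpace ℝ (Fin n)} (hz : z ∈ ball x R) :
    |tubeFun φ l r ΩT z - tubeFun φ l r ΩT x| ≤ 1 := by
  have hl := h.l_pos
  have hr := h.r_pos
  by_cases hne : ∃ q ∈ ball x R, q ∈ ΩT
  swap
  · push Not at hne
    have hx : x ∈ ball x R := mem_ball_self (lt_of_le_of_lt dist_nonneg hz)
    simp [tubeFun, hne z hz, hne x hx]
  obtain ⟨q, hq, hqT⟩ := hne
  have hx : x ∈ ball x R := mem_ball_self (lt_of_le_of_lt dist_nonneg hz)
  have hf : ∀ v ∈ ball x R, tubeFun φ l r ΩT v = tent l r ((φ.symm v) 0) := by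
    intro v hv
    by_cases hvT : v ∈ ΩT
    · simp [tubeFun, hvT]
    · simp only [tubeFun, hvT, not_false_eq_true, indicator_of_notMem]
      symm
      apply tent_eq_zero
      intro hv0
      apply hvT
      have hv' : φ.symm v ∈ ball (φ.symm x) R := by
        rw [mem_ball, φ.symm.dist_eq]; exact hv
      have := (ball_slab h hB hq hqT hv' hv0).2
      rwa [φ.apply_symm_apply] at this
  rw [hf z hz, hf x hx]
  set a := (φ.symm x) 0 with ha
  set d := max 0 (max (-a) (a - l)) with hd
  have hd0 : 0 ≤ d := le_max_left _ _
  refine tent_diff hr hl hd ?_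
  have hza : |(φ.symm z) 0 - a| < R := by
    have h1 : dist (φ.symm z) (φ.symm x) < R := by rw [φ.symm.dist_eq]; exact hz
    have h2 := EuclideanSpace.norm_eq (φ.symm z - φ.symm x)
    have h3 := PiLp.norm_apply_le (φ.symm z - φ.symm x) 0
    rw [dist_eq_norm] at h1
    simpa using h3.trans_lt h1
  suffices hR : R ≤ d + r from hza.le.trans hR
  by_contra hcon
  push Not at hcon
  set p := max 0 (min a l) with hp
  have hpI : p ∈ Set.Icc 0 l := by constructor <;> grind
  have hpd : |p - a| = d := by
    rcases abs_cases (p - a) with h | h <;> grind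
  let j : Fin n := ⟨1, by omega⟩
  have hj : j ≠ 0 := by
    intro h; have := congrArg Fin.val h; simp [j] at this
  have key : ∀ τ : ℝ, |τ| = r → ‖offAxis (φ.symm x) + τ • EuclideanSpace.single j (1:ℝ)‖ < r := by
    intro τ hτ
    let w : EuclideanSpace ℝ (Fin n) := φ.symm x + ((p - a) • EuclideanSpace.single 0 (1:ℝ) +
      τ • EuclideanSpace.single j (1:ℝ))
    have hwB : w ∈ ball (φ.symm x) R := by
      rw [mem_ball, dist_eq_norm]
      simp only [w, add_sub_cancel_left]
      refine (norm_add_le _ _).trans_lt ?_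
      rw [norm_smul, norm_smul]
      simp only [PiLp.norm_single, norm_one, mul_one, Real.norm_eq_abs, hpd, hτ]
      exact hcon
    have hw0 : w 0 = p := by
      simp [w, hj.symm, ← ha]
    have := (ball_slab h hB hq hqT hwB (hw0 ▸ hpI)).1
    rw [radial_eq] at this
    simp only [w, offAxis_add, offAxis_smul] at this
    have e0 : offAxis (EuclideanSpace.single (0 : Fin n) (1:ℝ)) = 0 := by simp [offAxis]
    have e1 : offAxis (EuclideanSpace.single j (1:ℝ)) = EuclideanSpace.single j (1:ℝ) := by
      simp [offAxis, hj.symm]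
    rwa [e0, e1, smul_zero, zero_add] at this
  have k1 := key r (abs_of_pos hr)
  have k2 := key (-r) (by rw [abs_neg, abs_of_pos hr])
  have k3 := norm_sub_le (offAxis (φ.symm x) + r • EuclideanSpace.single j (1:ℝ))
    (offAxis (φ.symm x) + (-r) • EuclideanSpace.single j (1:ℝ))
  have k4 : (offAxis (φ.symm x) + r • EuclideanSpace.single j (1:ℝ)) -
    (offAxis (φ.symm x) + (-r) • EuclideanSpace.single j (1:ℝ)) =
      (2 * r) • EuclideanSpace.single j (1:ℝ) := by
    module
  rw [k4, norm_smul, PiLp.norm_single, Real.norm_of_nonneg (by positivity)] at k3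
  rw [norm_one, mul_one] at k3
  linarith

lemma measurableSet_comp {n : ℕ} [NeZero n] {Ω : Set (EuclideanSpace ℝ (Fin n))}
    (hΩ : IsOpen Ω) {φ : EuclideanSpace ℝ (Fin n) ≃ᵢ EuclideanSpace ℝ (Fin n)}
    {l r c : ℝ} {ΩT : Set (EuclideanSpace ℝ (Fin n))} (h : IsEssentialTube Ω φ l r c ΩT) :
    MeasurableSet ΩT := by
  obtain ⟨p, hp, hΩT⟩ := h.isComp
  have hcl : IsClosed (φ '' stdCylinder l r) :=
    φ.toHomeomorph.isClosedMap _ (isClosed_cyl l r)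
  have hm : MeasurableSet ((φ '' stdCylinder l r) ∩ Ω) := hcl.measurableSet.inter hΩ.measurableSet
  have : ΩT = closure ΩT ∩ ((φ '' stdCylinder l r) ∩ Ω) := by
    apply Subset.antisymm
    · exact subset_inter subset_closure (hΩT ▸ connectedComponentIn_subset _ _)
    · conv_rhs => rw [hΩT]
      apply IsPreconnected.subset_connectedComponentIn
      · refine IsPreconnected.subset_closure (s := ΩT) ?_ ?_ inter_subset_left
        · rw [hΩT]; exact isPreconnected_connectedComponentIn
        · exact subset_inter subset_closure (hΩT ▸ connectedComponentIn_subset _ _)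
      · refine ⟨subset_closure ?_, hp⟩
        rw [hΩT]; exact mem_connectedComponentIn hp
      · exact inter_subset_right
  rw [this]
  exact isClosed_closure.measurableSet.inter hm

lemma comp_subset {n : ℕ} [NeZero n] {Ω : Set (EuclideanSpace ℝ (Fin n))}
    {φ : EuclideanSpace ℝ (Fin n) ≃ᵢ EuclideanSpace ℝ (Fin n)}
    {l r c : ℝ} {ΩT : Set (EuclideanSpace ℝ (Fin n))} (h : IsEssentialTube Ω φ l r c ΩT) :
    ΩT ⊆ Ω := by
  obtain ⟨p, hp, hΩT⟩ := h.isComp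
  rw [hΩT]
  exact (connectedComponentIn_subset _ _).trans inter_subset_right

lemma volume_eq_hausdorff (d : ℕ) : ∃ k : NNReal, k ≠ 0 ∧
    (volume : Measure (EuclideanSpace ℝ (Fin d))) = k • μH[(d:ℝ)] :=
  ⟨_, Measure.addHaarScalarFactor_volume_hausdorffMeasure_ne_zero d,
    Measure.isAddLeftInvariant_eq_smul _ _⟩

lemma isometryEquiv_mp {d : ℕ} (φ : EuclideanSpace ℝ (Fin d) ≃ᵢ EuclideanSpace ℝ (Fin d)) :
    MeasurePreserving φ volume volume := by
  obtain ⟨k, -, hk⟩ := volume_eq_hausdorff d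
  rw [hk]
  exact (φ.measurePreserving_hausdorffMeasure d).smul_measure k

/-- The embedding of a slice. -/
noncomputable def sliceEmb {m : ℕ} (t : ℝ) (y : EuclideanSpace ℝ (Fin m)) :
    EuclideanSpace ℝ (Fin (m+1)) := WithLp.toLp 2 (Fin.cons t y.ofLp)

lemma sliceEmb_isometry {m : ℕ} (t : ℝ) :
    Isometry (sliceEmb t : EuclideanSpace ℝ (Fin m) → EuclideanSpace ℝ (Fin (m+1))) := by
  refine Isometry.of_dist_eq fun x y => ?_
  rw [EuclideanSpace.dist_eq, EuclideanSpace.dist_eq, Fin.sum_univ_succ]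
  simp [sliceEmb]

lemma radial_sliceEmb {m : ℕ} (t : ℝ) (y : EuclideanSpace ℝ (Fin m)) :
    radial (sliceEmb t y) = ‖y‖ := by
  rw [radial, EuclideanSpace.norm_eq]
  congr 1
  have h := Finset.add_sum_erase Finset.univ (fun i => (sliceEmb t y) i ^ 2)
    (Finset.mem_univ (0 : Fin (m+1)))
  rw [Fin.sum_univ_succ] at h
  have h2 := add_left_cancel h
  rw [h2]
  simp [sliceEmb]

lemma stdSlice_eq {m : ℕ} (r t : ℝ) : (stdSlice r t : Set (EuclideanSpace ℝ (Fin (m+1)))) =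
    sliceEmb t '' closedBall 0 r := by
  ext z
  constructor
  · rintro ⟨h0, hr⟩
    have hz : z = sliceEmb t (WithLp.toLp 2 (Fin.tail z.ofLp)) := by
      ext i
      refine Fin.cases ?_ (fun j => ?_) i
      · simp [sliceEmb, h0]
      · simp [sliceEmb, Fin.tail]
    refine ⟨_, ?_, hz.symm⟩
    rw [hz, radial_sliceEmb] at hr
    simpa using hr
  · rintro ⟨y, hy, rfl⟩
    refine ⟨by simp [sliceEmb], ?_⟩
    rw [radial_sliceEmb]
    simpa using hy

/-- Fubini lower bound. -/
lemma volume_ge_of_slices {m : ℕ} (S : Set (EuclideanSpace ℝ (Fin (m+1)))) (hS : MeasurableSet S)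
    (a b : ℝ) (v : ℝ≥0∞) (h : ∀ t ∈ Icc a b, v ≤ volume (sliceEmb t ⁻¹' S)) :
    v * ENNReal.ofReal (b - a) ≤ volume S := by
  have h1 := (PiLp.volume_preserving_toLp (Fin (m+1))).measure_preimage hS.nullMeasurableSet
  set S' : Set (Fin (m+1) → ℝ) := WithLp.toLp 2 ⁻¹' S with hS'
  have hS'm : MeasurableSet S' := (PiLp.volume_preserving_toLp (Fin (m+1))).measurable hS
  have h2 := (volume_preserving_piFinSuccAbove (fun _ : Fin (m+1) => ℝ) 0).symm.measure_preimage
    hS'm.nullMeasurableSet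
  rw [← h1, ← h2, Measure.volume_eq_prod, Measure.prod_apply]
  swap
  · exact (MeasurableEquiv.measurable _) hS'm
  calc v * ENNReal.ofReal (b - a) = ∫⁻ t in Icc a b, v := by
        rw [setLIntegral_const, Real.volume_Icc]
    _ ≤ ∫⁻ t in Icc a b, volume (sliceEmb t ⁻¹' S) := by
        apply setLIntegral_mono' measurableSet_Icc h
    _ ≤ ∫⁻ t, volume (sliceEmb t ⁻¹' S) := setLIntegral_le_lintegral _ _
    _ ≤ _ := by
        apply lintegral_mono
        intro t
        have hm : MeasurableSet (sliceEmb t ⁻¹' S) :=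
          (sliceEmb_isometry t).continuous.measurable hS
        have := (PiLp.volume_preserving_toLp (Fin m)).measure_preimage hm.nullMeasurableSet
        simp only
        rw [← this]
        apply le_of_eq
        congr 1
        ext y
        simp [S', sliceEmb, MeasurableEquiv.piFinSuccAbove, Fin.insertNthEquiv]

/-- The thick part of a tube component. -/
def midPart {n : ℕ} [NeZero n] (φ : EuclideanSpace ℝ (Fin n) ≃ᵢ EuclideanSpace ℝ (Fin n)) (l : ℝ)
    (ΩT : Set (EuclideanSpace ℝ (Fin n))) : Set (EuclideanSpace ℝ (Fin n)) :=
  ΩT ∩ {z | (φ.symm z) 0 ∈ Icc (l/4) (3*l/4)}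

lemma measurableSet_midPart {n : ℕ} [NeZero n]
    (φ : EuclideanSpace ℝ (Fin n) ≃ᵢ EuclideanSpace ℝ (Fin n)) (l : ℝ)
    {ΩT : Set (EuclideanSpace ℝ (Fin n))} (h : MeasurableSet ΩT) :
    MeasurableSet (midPart φ l ΩT) := by
  refine h.inter ?_
  have h0 : Continuous (fun z : EuclideanSpace ℝ (Fin n) => (φ.symm z) 0) := by
    have := φ.symm.continuous
    fun_prop
  exact h0.measurable measurableSet_Icc

lemma tube_volume (m : ℕ) : ∃ κ : ℝ, 0 < κ ∧ ∀ (Ω : Set (EuclideanSpace ℝ (Fin (m+1))))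
    (_ : IsOpen Ω) (φ : EuclideanSpace ℝ (Fin (m+1)) ≃ᵢ EuclideanSpace ℝ (Fin (m+1)))
    (l r c : ℝ) (ΩT : Set (EuclideanSpace ℝ (Fin (m+1)))) (_ : IsEssentialTube Ω φ l r c ΩT),
    ENNReal.ofReal (κ * c * r ^ m * l) ≤ volume (midPart φ l ΩT) := by
  obtain ⟨k, hk0, hk⟩ := volume_eq_hausdorff m
  have hfin : volume (ball (0 : EuclideanSpace ℝ (Fin m)) 1) ≠ ⊤ := measure_ball_lt_top.ne
  have hpos : 0 < volume (ball (0 : EuclideanSpace ℝ (Fin m)) 1) := measure_ball_pos _ _ one_pos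
  set ω := (volume (ball (0 : EuclideanSpace ℝ (Fin m)) 1)).toReal with hω
  have hω0 : 0 < ω := ENNReal.toReal_pos hpos.ne' hfin
  refine ⟨ω / 2, by positivity, ?_⟩
  intro Ω hΩ φ l r c ΩT h
  have hl := h.l_pos
  have hr := h.r_pos
  have hc := h.c_pos
  have hmeas := measurableSet_midPart φ l (measurableSet_comp hΩ h)
  have hvol := (isometryEquiv_mp φ).measure_preimage hmeas.nullMeasurableSet
  rw [← hvol]
  refine le_trans ?_ (volume_ge_of_slices _ ((isometryEquiv_mp φ).measurable hmeas) (l/4) (3*l/4)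
    (ENNReal.ofReal (c * (r ^ m * ω))) ?_)
  · rw [← ENNReal.ofReal_mul (by positivity)]
    apply ENNReal.ofReal_le_ofReal
    apply le_of_eq; ring
  · intro t ht
    have ht' : t ∈ Icc 0 l := ⟨by linarith [ht.1], by linarith [ht.2]⟩
    have hs := h.slice_meas t ht'
    have hcast : ((m+1 : ℕ):ℝ) - 1 = (m:ℝ) := by push_cast; ring
    rw [hcast] at hs
    rw [φ.hausdorffMeasure_image, stdSlice_eq,
      (sliceEmb_isometry t).hausdorffMeasure_image (by simp)] at hs
    have heq : ΩT ∩ φ '' (sliceEmb t '' closedBall 0 r) ⊆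
        φ '' (sliceEmb t '' (sliceEmb t ⁻¹' (φ ⁻¹' midPart φ l ΩT))) := by
      rintro _ ⟨hz, _, ⟨y, hy, rfl⟩, rfl⟩
      refine ⟨_, ⟨y, ⟨hz, ?_⟩, rfl⟩, rfl⟩
      simpa [sliceEmb] using ht
    have hs2 := hs.trans (measure_mono heq)
    rw [φ.hausdorffMeasure_image, (sliceEmb_isometry t).hausdorffMeasure_image (by simp)] at hs2
    have hcb : volume (closedBall (0 : EuclideanSpace ℝ (Fin m)) r) =
        ENNReal.ofReal (r ^ m * ω) := by
      rw [Measure.addHaar_closedBall _ _ hr.le, ENNReal.ofReal_mul (by positivity), hω,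
        ENNReal.ofReal_toReal hfin]
      simp
    calc ENNReal.ofReal (c * (r ^ m * ω)) =
          ENNReal.ofReal c * volume (closedBall (0 : EuclideanSpace ℝ (Fin m)) r) := by
          rw [hcb, ENNReal.ofReal_mul hc.le]
      _ = k * (ENNReal.ofReal c * μH[(m:ℝ)] (closedBall (0 : EuclideanSpace ℝ (Fin m)) r)) := by
          rw [hk, Measure.smul_apply, ENNReal.smul_def, smul_eq_mul]; ring
      _ ≤ k * μH[(m:ℝ)] (sliceEmb t ⁻¹' (φ ⁻¹' midPart φ l ΩT)) := by gcongr
      _ = _ := by rw [hk, Measure.smul_apply, ENNReal.smul_def, smul_eq_mul]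

/-- The test function of a finite family of tubes. -/
noncomputable def famFun {n : ℕ} [NeZero n] {ι : Type*}
    (φ : ι → (EuclideanSpace ℝ (Fin n) ≃ᵢ EuclideanSpace ℝ (Fin n)))
    (l r : ι → ℝ) (ΩT : ι → Set (EuclideanSpace ℝ (Fin n))) (F : Finset ι)
    (z : EuclideanSpace ℝ (Fin n)) : ℝ := ∑ i ∈ F, tubeFun (φ i) (l i) (r i) (ΩT i) z

lemma famFun_eq_zero {n : ℕ} [NeZero n] {ι : Type*}
    (φ : ι → (EuclideanSpace ℝ (Fin n) ≃ᵢ EuclideanSpace ℝ (Fin n)))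
    (l r : ι → ℝ) {ΩT : ι → Set (EuclideanSpace ℝ (Fin n))} (F : Finset ι)
    {z : EuclideanSpace ℝ (Fin n)} (h : ∀ i ∈ F, z ∉ ΩT i) : famFun φ l r ΩT F z = 0 :=
  Finset.sum_eq_zero fun i hi => indicator_of_notMem (h i hi) _

lemma famFun_eq {n : ℕ} [NeZero n] {ι : Type*}
    (φ : ι → (EuclideanSpace ℝ (Fin n) ≃ᵢ EuclideanSpace ℝ (Fin n)))
    (l r : ι → ℝ) {ΩT : ι → Set (EuclideanSpace ℝ (Fin n))}
    (hdisj : Pairwise (Function.onFun Disjoint ΩT)) {F : Finset ι} {i : ι} (hi : i ∈ F)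
    {z : EuclideanSpace ℝ (Fin n)} (hz : z ∈ ΩT i) :
    famFun φ l r ΩT F z = tubeFun (φ i) (l i) (r i) (ΩT i) z := by
  refine Finset.sum_eq_single_of_mem i hi fun j _ hj => indicator_of_notMem ?_ _
  exact Set.disjoint_left.1 (hdisj hj.symm) hz

lemma tubeFun_nonneg {n : ℕ} [NeZero n]
    (φ : EuclideanSpace ℝ (Fin n) ≃ᵢ EuclideanSpace ℝ (Fin n)) {l r : ℝ} (hr : 0 < r)
    (ΩT : Set (EuclideanSpace ℝ (Fin n))) (z : EuclideanSpace ℝ (Fin n)) :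
    0 ≤ tubeFun φ l r ΩT z :=
  indicator_nonneg (fun _ _ => tent_nonneg hr) _

lemma famFun_integrableOn {n : ℕ} [NeZero n] {Ω : Set (EuclideanSpace ℝ (Fin n))}
    (hΩop : IsOpen Ω) (hΩfin : volume Ω ≠ ⊤) {ι : Type*}
    {φ : ι → (EuclideanSpace ℝ (Fin n) ≃ᵢ EuclideanSpace ℝ (Fin n))}
    {l r c : ι → ℝ} {ΩT : ι → Set (EuclideanSpace ℝ (Fin n))}
    (hT : ∀ i, IsEssentialTube Ω (φ i) (l i) (r i) (c i) (ΩT i)) (F : Finset ι) :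
    IntegrableOn (famFun φ l r ΩT F) Ω volume := by
  unfold famFun
  refine integrable_finsetSum _ fun i _ => ?_
  have hcont : Continuous fun z => tent (l i) (r i) (((φ i).symm z) 0) := by
    have := (φ i).symm.continuous
    unfold tent
    fun_prop
  refine Measure.integrableOn_of_bounded (M := |l i| / r i) hΩfin
    (hcont.measurable.indicator (measurableSet_comp hΩop (hT i))).aestronglyMeasurable ?_
  refine Filter.Eventually.of_forall fun z => ?_
  rw [Real.norm_of_nonneg (tubeFun_nonneg _ (hT i).r_pos _ _)]
  refine indicator_apply_le' (fun _ => tent_le (hT i).r_pos) fun _ => ?_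
  have := (hT i).r_pos
  positivity

lemma famFun_osc {n : ℕ} [NeZero n] (hn : 2 ≤ n) {Ω : Set (EuclideanSpace ℝ (Fin n))}
    {ι : Type*} {φ : ι → (EuclideanSpace ℝ (Fin n) ≃ᵢ EuclideanSpace ℝ (Fin n))}
    {l r c : ι → ℝ} {ΩT : ι → Set (EuclideanSpace ℝ (Fin n))}
    (hT : ∀ i, IsEssentialTube Ω (φ i) (l i) (r i) (c i) (ΩT i))
    (hdisj : Pairwise (Function.onFun Disjoint ΩT)) (F : Finset ι)
    {x : EuclideanSpace ℝ (Fin n)} {R : ℝ} (hB : ball x R ⊆ Ω)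
    {z : EuclideanSpace ℝ (Fin n)} (hz : z ∈ ball x R) :
    |famFun φ l r ΩT F z - famFun φ l r ΩT F x| ≤ 1 := by
  have hnn : ∀ y, 0 ≤ famFun φ l r ΩT F y := fun y =>
    Finset.sum_nonneg fun i _ => tubeFun_nonneg _ (hT i).r_pos _ _
  have key : ∀ y w, (∀ i, tubeFun (φ i) (l i) (r i) (ΩT i) y ≤
      tubeFun (φ i) (l i) (r i) (ΩT i) w + 1) →
      famFun φ l r ΩT F y ≤ famFun φ l r ΩT F w + 1 := by
    intro y w h
    by_cases hy : ∃ i ∈ F, y ∈ ΩT i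
    · obtain ⟨i, hi, hyi⟩ := hy
      rw [famFun_eq φ l r hdisj hi hyi]
      refine (h i).trans ?_
      gcongr
      exact Finset.single_le_sum (f := fun i => tubeFun (φ i) (l i) (r i) (ΩT i) w)
        (fun j _ => tubeFun_nonneg _ (hT j).r_pos _ _) hi
    · push Not at hy
      rw [famFun_eq_zero φ l r F hy]
      linarith [hnn w]
  have hosc := fun i => abs_le.1 (tubeFun_osc hn (hT i) hB hz)
  rw [abs_le]
  constructor
  · linarith [key x z fun i => by linarith [(hosc i).1]]
  · linarith [key z x fun i => by linarith [(hosc i).2]]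

lemma famFun_ball {n : ℕ} [NeZero n] (hn : 2 ≤ n) {s : ℝ} (hs : 0 < s)
    {Ω : Set (EuclideanSpace ℝ (Fin n))} (hΩop : IsOpen Ω) (hΩfin : volume Ω ≠ ⊤)
    {ι : Type*} {φ : ι → (EuclideanSpace ℝ (Fin n) ≃ᵢ EuclideanSpace ℝ (Fin n))}
    {l r c : ι → ℝ} {ΩT : ι → Set (EuclideanSpace ℝ (Fin n))}
    (hT : ∀ i, IsEssentialTube Ω (φ i) (l i) (r i) (c i) (ΩT i))
    (hdisj : Pairwise (Function.onFun Disjoint ΩT)) (F : Finset ι)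
    {x : EuclideanSpace ℝ (Fin n)} {R : ℝ} (hR : 0 < R) (hB : ball x R ⊆ Ω) :
    (lsAvgE s (famFun φ l r ΩT F) (ball x R)) ^ (1/s) ≤ ENNReal.ofReal 2 := by
  set u := famFun φ l r ΩT F with hu
  have hosc : ∀ z ∈ ball x R, |u z - u x| ≤ 1 := fun z hz => famFun_osc hn hT hdisj F hB hz
  have hv0 : volume (ball x R) ≠ 0 := (measure_ball_pos _ _ hR).ne'
  have hvt : volume (ball x R) ≠ ⊤ := measure_ball_lt_top.ne
  have hInt : IntegrableOn u (ball x R) volume :=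
    (famFun_integrableOn hΩop hΩfin hT F).mono_set hB
  have hmean : (⨍ y in ball x R, u y) ∈ Icc (u x - 1) (u x + 1) := by
    refine (convex_Icc (u x - 1) (u x + 1)).set_average_mem isClosed_Icc hv0 hvt ?_ hInt
    refine ae_restrict_of_forall_mem measurableSet_ball fun z hz => ?_
    have := abs_le.1 (hosc z hz)
    constructor <;> linarith [this.1, this.2]
  have hle : lsAvgE s u (ball x R) ≤ ENNReal.ofReal 2 ^ s := by
    unfold lsAvgE
    calc _ ≤ (volume (ball x R))⁻¹ * ∫⁻ z in ball x R, ENNReal.ofReal 2 ^ s := by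
          refine mul_le_mul_right (setLIntegral_mono' measurableSet_ball fun z hz => ?_) _
          rw [ENNReal.ofReal_rpow_of_pos two_pos]
          apply ENNReal.ofReal_le_ofReal
          refine Real.rpow_le_rpow (abs_nonneg _) ?_ hs.le
          have := abs_le.1 (hosc z hz)
          rw [abs_le]
          constructor <;> linarith [this.1, this.2, hmean.1, hmean.2]
      _ = _ := by
          rw [setLIntegral_const, mul_comm, mul_assoc, ENNReal.mul_inv_cancel hv0 hvt, mul_one]
  calc _ ≤ (ENNReal.ofReal 2 ^ s) ^ (1/s) := ENNReal.rpow_le_rpow hle (by positivity)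
    _ = _ := by rw [← ENNReal.rpow_mul, mul_one_div_cancel hs.ne', ENNReal.rpow_one]

lemma rpow_split {s : ℝ} (hs : 0 < s) (y a : ℝ) : ENNReal.ofReal (|y| ^ s) ≤
    ENNReal.ofReal (2 ^ s) * (ENNReal.ofReal (|y - a| ^ s) + ENNReal.ofReal (|a| ^ s)) := by
  rw [← ENNReal.ofReal_add (by positivity) (by positivity), ← ENNReal.ofReal_mul (by positivity)]
  apply ENNReal.ofReal_le_ofReal
  have h1 : |y| ≤ |y - a| + |a| := by
    have := abs_add_le (y - a) a
    simpa using this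
  have p1 : 0 ≤ |y - a| ^ s := by positivity
  have p2 : 0 ≤ |a| ^ s := by positivity
  have h2 : (0:ℝ) ≤ 2 ^ s := by positivity
  rcases le_total (|y - a|) |a| with h | h
  · calc |y| ^ s ≤ (2 * |a|) ^ s := Real.rpow_le_rpow (abs_nonneg _) (by linarith) hs.le
      _ = 2 ^ s * |a| ^ s := Real.mul_rpow (by norm_num) (abs_nonneg _)
      _ ≤ _ := by gcongr; linarith
  · calc |y| ^ s ≤ (2 * |y - a|) ^ s := Real.rpow_le_rpow (abs_nonneg _) (by linarith) hs.le
      _ = 2 ^ s * |y - a| ^ s := Real.mul_rpow (by norm_num) (abs_nonneg _)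
      _ ≤ _ := by gcongr; linarith

/-- If `Ω` has a family of essential tubes with pairwise disjoint
components and divergent sum `E_𝒯`, then `Ω` is not `L^s`-averaging. -/
theorem not_LsAveraging_of_tubes {n : ℕ} [NeZero n] (hn : 2 ≤ n) (s : ℝ) (hs : 1 ≤ s)
    (Ω : Set (EuclideanSpace ℝ (Fin n))) (hΩop : IsOpen Ω) (hΩconn : IsConnected Ω)
    (hΩbd : Bornology.IsBounded Ω) {ι : Type*}
    (φ : ι → (EuclideanSpace ℝ (Fin n) ≃ᵢ EuclideanSpace ℝ (Fin n)))
    (l r c : ι → ℝ) (ΩT : ι → Set (EuclideanSpace ℝ (Fin n)))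
    (hT : ∀ i, IsEssentialTube Ω (φ i) (l i) (r i) (c i) (ΩT i))
    (hdisj : Pairwise (Function.onFun Disjoint ΩT))
    (hdiv : ∑' i, ENNReal.ofReal (c i * r i ^ n * (l i / r i) ^ (s+1)) = ⊤) :
    ¬ IsLsAveragingDomain s Ω := by
  obtain ⟨m, rfl⟩ : ∃ m, n = m + 1 := ⟨n - 1, by omega⟩
  rintro ⟨C, hC, hav⟩
  have hs0 : 0 < s := by linarith
  obtain ⟨κ, hκ, hvol⟩ := tube_volume m
  have hvolE := fun i => hvol Ω hΩop (φ i) (l i) (r i) (c i) (ΩT i) (hT i)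
  have hmeas := fun i => measurableSet_comp hΩop (hT i)
  have hΩfin : volume Ω ≠ ⊤ := hΩbd.measure_lt_top.ne
  have hΩpos : volume Ω ≠ 0 := (hΩop.measure_pos volume hΩconn.nonempty).ne'
  have hne : Nonempty ι := by
    by_contra hcon
    rw [not_nonempty_iff] at hcon
    simp at hdiv
  obtain ⟨i0⟩ := hne
  have hA : volume (ΩT i0) ≠ 0 := by
    have h1 : volume (midPart (φ i0) (l i0) (ΩT i0)) ≤ volume (ΩT i0) :=
      measure_mono inter_subset_left
    have h2 := (hvolE i0).trans h1
    have := (hT i0).l_pos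
    have := (hT i0).r_pos
    have := (hT i0).c_pos
    intro h0
    rw [h0, nonpos_iff_eq_zero, ENNReal.ofReal_eq_zero] at h2
    have : 0 < κ * c i0 * r i0 ^ m * l i0 := by positivity
    linarith
  set K : ℝ≥0∞ := (C * ENNReal.ofReal 2) ^ s * volume Ω with hK
  have hKfin : K ≠ ⊤ := by
    rw [hK]
    exact ENNReal.mul_ne_top (ENNReal.rpow_ne_top_of_nonneg hs0.le
      (ENNReal.mul_ne_top hC ENNReal.ofReal_ne_top)) hΩfin
  set K' : ℝ≥0∞ := ENNReal.ofReal (2 ^ s) * (K + K / volume (ΩT i0) * volume Ω) with hK'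
  have hK'fin : K' ≠ ⊤ := by
    rw [hK']
    refine ENNReal.mul_ne_top ENNReal.ofReal_ne_top (ENNReal.add_ne_top.2 ⟨hKfin, ?_⟩)
    exact ENNReal.mul_ne_top (ENNReal.div_ne_top hKfin hA) hΩfin
  -- the main estimate for finite subfamilies
  have main : ∀ F : Finset ι, i0 ∉ F →
      ∑ i ∈ F, ENNReal.ofReal (κ * (1/4) ^ s) *
        ENNReal.ofReal (c i * r i ^ (m+1) * (l i / r i) ^ (s+1)) ≤ K' := by
    intro F hF
    set u := famFun φ l r ΩT F with hu
    have hInt := famFun_integrableOn hΩop hΩfin hT F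
    have h1 := hav u hInt.locallyIntegrableOn
    have h2 : (⨆ (x : EuclideanSpace ℝ (Fin (m+1))) (ρ : ℝ) (_ : 0 < ρ ∧ ball x ρ ⊆ Ω),
          (lsAvgE s u (ball x ρ)) ^ (1/s)) ≤ ENNReal.ofReal 2 := by
      refine iSup_le fun x => iSup_le fun ρ => iSup_le fun hρ => ?_
      exact famFun_ball hn hs0 hΩop hΩfin hT hdisj F hρ.1 hρ.2
    have h3 : lsAvgE s u Ω ≤ (C * ENNReal.ofReal 2) ^ s := by
      have h4 := ENNReal.rpow_le_rpow (h1.trans (mul_le_mul_right h2 C)) hs0.le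
      rwa [← ENNReal.rpow_mul, one_div_mul_cancel hs0.ne', ENNReal.rpow_one] at h4
    set a := ⨍ y in Ω, u y with ha
    set J := ∫⁻ z in Ω, ENNReal.ofReal (|u z - a| ^ s) with hJ
    have hJK : J ≤ K := by
      have h5 : (volume Ω)⁻¹ * J ≤ (C * ENNReal.ofReal 2) ^ s := h3
      rw [mul_comm, ← div_eq_mul_inv] at h5
      rw [hK]
      exact (ENNReal.div_le_iff hΩpos hΩfin).1 h5
    have haK : ENNReal.ofReal (|a| ^ s) ≤ K / volume (ΩT i0) := by
      rw [ENNReal.le_div_iff_mul_le (Or.inl hA)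
        (Or.inl ((measure_mono (comp_subset (hT i0))).trans_lt hΩfin.lt_top).ne)]
      refine le_trans ?_ hJK
      calc ENNReal.ofReal (|a| ^ s) * volume (ΩT i0)
          = ∫⁻ z in ΩT i0, ENNReal.ofReal (|a| ^ s) := by rw [setLIntegral_const]
        _ = ∫⁻ z in ΩT i0, ENNReal.ofReal (|u z - a| ^ s) := by
            refine setLIntegral_congr_fun (hmeas i0) fun z hz => ?_
            have : u z = 0 := famFun_eq_zero φ l r F fun i hi hzi => by
              have hne : i0 ≠ i := fun h => hF (h ▸ hi)
              exact (Set.disjoint_left.1 (hdisj hne)) hz hzi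
            simp [this]
        _ ≤ J := lintegral_mono_set (comp_subset (hT i0))
    have hU : ∫⁻ z in Ω, ENNReal.ofReal (|u z| ^ s) ≤ K' := by
      calc ∫⁻ z in Ω, ENNReal.ofReal (|u z| ^ s)
          ≤ ∫⁻ z in Ω, ENNReal.ofReal (2 ^ s) * (ENNReal.ofReal (|u z - a| ^ s) +
              ENNReal.ofReal (|a| ^ s)) := lintegral_mono fun z => rpow_split hs0 _ _
        _ = ENNReal.ofReal (2 ^ s) * (J + ENNReal.ofReal (|a| ^ s) * volume Ω) := by
            rw [lintegral_const_mul' _ _ ENNReal.ofReal_ne_top,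
              lintegral_add_right _ measurable_const, setLIntegral_const]
        _ ≤ K' := by rw [hK']; gcongr
    refine le_trans ?_ hU
    calc _ ≤ ∑ i ∈ F, ∫⁻ z in midPart (φ i) (l i) (ΩT i), ENNReal.ofReal (|u z| ^ s) := by
          refine Finset.sum_le_sum fun i hi => ?_
          have hl := (hT i).l_pos
          have hr := (hT i).r_pos
          have hc := (hT i).c_pos
          calc _ = ENNReal.ofReal ((l i / (4 * r i)) ^ s) *
                ENNReal.ofReal (κ * c i * r i ^ m * l i) := by
                rw [← ENNReal.ofReal_mul (by positivity), ← ENNReal.ofReal_mul (by positivity)]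
                congr 1
                have e1 : l i / (4 * r i) = (1/4) * (l i / r i) := by field_simp
                rw [e1, Real.mul_rpow (by norm_num) (by positivity),
                  Real.rpow_add (by positivity), Real.rpow_one]
                field_simp
                ring
            _ ≤ ENNReal.ofReal ((l i / (4 * r i)) ^ s) *
                volume (midPart (φ i) (l i) (ΩT i)) := by gcongr; exact hvolE i
            _ = ∫⁻ z in midPart (φ i) (l i) (ΩT i), ENNReal.ofReal ((l i / (4 * r i)) ^ s) := by
                rw [setLIntegral_const]
            _ ≤ _ := by
                refine setLIntegral_mono' (measurableSet_midPart _ _ (hmeas i)) fun z hz => ?_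
                apply ENNReal.ofReal_le_ofReal
                apply Real.rpow_le_rpow (by positivity) _ hs0.le
                refine le_trans ?_ (le_abs_self _)
                rw [hu, famFun_eq φ l r hdisj hi hz.1, tubeFun, indicator_of_mem hz.1, tent,
                  ← div_div]
                gcongr
                apply le_max_of_le_right
                rw [le_min_iff]
                have hz2 := hz.2
                simp only [mem_ofPred_eq, mem_Icc] at hz2
                constructor <;> linarith [hz2.1, hz2.2]
      _ = ∫⁻ z in ⋃ i ∈ F, midPart (φ i) (l i) (ΩT i), ENNReal.ofReal (|u z| ^ s) := by
          rw [lintegral_biUnion_finset]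
          · intro i _ j _ hij
            exact (hdisj hij).mono inter_subset_left inter_subset_left
          · exact fun i _ => measurableSet_midPart _ _ (hmeas i)
      _ ≤ _ := by
          apply lintegral_mono_set
          refine iUnion₂_subset fun i _ => ?_
          exact inter_subset_left.trans (comp_subset (hT i))
  classical
  set f : ι → ℝ≥0∞ := fun i => ENNReal.ofReal (c i * r i ^ (m+1) * (l i / r i) ^ (s+1)) with hf
  set β := ENNReal.ofReal (κ * (1/4) ^ s) with hβ
  have hβ0 : β ≠ 0 := by
    rw [hβ, Ne, ENNReal.ofReal_eq_zero, not_le]; positivity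
  have hbound : ∑' i, f i ≤ f i0 + K' / β := by
    rw [ENNReal.tsum_eq_iSup_sum]
    refine iSup_le fun F => ?_
    have h1 := main (F.erase i0) (Finset.notMem_erase _ _)
    rw [← Finset.mul_sum] at h1
    calc ∑ i ∈ F, f i ≤ ∑ i ∈ insert i0 (F.erase i0), f i :=
          Finset.sum_le_sum_of_subset (Finset.insert_erase_subset _ _)
      _ = f i0 + ∑ i ∈ F.erase i0, f i := Finset.sum_insert (Finset.notMem_erase _ _)
      _ ≤ _ := by
          gcongr
          rw [ENNReal.le_div_iff_mul_le (Or.inl hβ0) (Or.inl ENNReal.ofReal_ne_top), mul_comm]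
          exact h1
  rw [hdiv, top_le_iff] at hbound
  exact (ENNReal.add_ne_top.2 ⟨ENNReal.ofReal_ne_top, ENNReal.div_ne_top hK'fin hβ0⟩) hbound
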